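/- Let τ ∈ iℝ_{>0}, so 0 < q = exp(2πiτ) < 1. Let λ ∈ ℝ, α, β ∈ 2ℤ_{>0} and ρ, σ ∈ ℝ_{≥3}. For x ∈ ℂ with |Re(x)| ≤ 2, define φ_λ(x) = ∫_0^1 [ Γ_{2τ}(−1/(2τ)+β+σ−iλ+x+y/τ)·Γ_{2τ}(−1−1/(2τ)+σ−iλ−x−y/τ) / ( Γ_{2τ}(−1/(2τ)+β+σ+iλ−x−y/τ)·Γ_{2τ}(1−1/(2τ)+σ+iλ+x+y/τ) ) ] × [ Γ_{2τ}(−1+1/(2τ)+α+ρ+iλ−y/τ)·Γ_{2τ}(1/(2τ)+ρ+iλ+y/τ) / ( Γ_{2τ}(1+1/(2τ)+α+ρ−iλ+y/τ)·Γ_{2τ}(1/(2τ)+ρ−iλ−y/τ) ) ] dy. Then φ_λ is analytic on the strip |Re(x)| ≤ 2, and for every x ∈ iℝ with q^{2x} ∉ {1, q^{2}, q^{−2}} it satisfies the second order difference equation B(x)·φ_λ(x+2) + C(x)·φ_λ(x) + D(x)·φ_λ(x−2) = E(λ;β)·φ_λ(x). -/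

import Mathlib

noncomputable section

open Complex MeasureTheory

/-- `q^u = exp(2πiτu)`. -/
def qpow (τ u : ℂ) : ℂ := Complex.exp (2 * (Real.pi : ℂ) * Complex.I * τ * u)

/-- The q-gamma type function `Γ_τ(x) = q^{−x²/16} / (−q^{(x+1)/2}; q)_∞`. -/
def qGamma (τ x : ℂ) : ℂ :=
  qpow τ (-(x ^ 2) / 16) / ∏' n : ℕ, (1 + qpow τ ((x + 1) / 2 + (n : ℂ)))

/-- The Askey-Wilson coefficient
`A(x) = (1−q^{a+x})(1−q^{b+x})(1−q^{c+x})(1−q^{d+x}) / ((1−q^{2x})(1−q^{2+2x}))`. -/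
def awA (τ a b c d x : ℂ) : ℂ :=
  ((1 - qpow τ (a + x)) * (1 - qpow τ (b + x)) * (1 - qpow τ (c + x)) * (1 - qpow τ (d + x))) /
    ((1 - qpow τ (2 * x)) * (1 - qpow τ (2 + 2 * x)))

/-- The coefficient `B(x)` of the gauged Askey-Wilson operator `L`. -/
def coefB (τ β a b x : ℂ) : ℂ :=
  qpow τ (-β) *
    ((1 - qpow τ (a + x)) * (1 - qpow τ (2 - a + x)) * (1 - qpow τ (b + x)) *
        (1 - qpow τ (2 - b + x))) /
    ((1 - qpow τ (2 * x)) * (1 - qpow τ (2 + 2 * x)))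

/-- The coefficient `D(x)` of the gauged Askey-Wilson operator `L`. -/
def coefD (τ β c d x : ℂ) : ℂ :=
  qpow τ (-β) *
    ((1 - qpow τ (c - x)) * (1 - qpow τ (2 - c - x)) * (1 - qpow τ (d - x)) *
        (1 - qpow τ (2 - d - x))) /
    ((1 - qpow τ (-(2 * x))) * (1 - qpow τ (2 - 2 * x)))

/-- The eigenvalue `E(λ;β) = −1 − q^{2−2β} + q^{1−β}(q^{2iλ}+q^{−2iλ})`. -/
def eigenE (τ lam β : ℂ) : ℂ :=
  -1 - qpow τ (2 - 2 * β) +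
    qpow τ (1 - β) * (qpow τ (2 * Complex.I * lam) + qpow τ (-(2 * Complex.I * lam)))

/-- The matrix coefficient `φ_λ(x)` given by the explicit integral (4.11) of the paper. -/
def phiMat (τ lam α ρ β σ x : ℂ) : ℂ :=
  ∫ y in (0 : ℝ)..1,
    (qGamma (2 * τ) (-(2 * τ)⁻¹ + β + σ - Complex.I * lam + x + (y : ℂ) / τ) *
          qGamma (2 * τ) (-1 - (2 * τ)⁻¹ + σ - Complex.I * lam - x - (y : ℂ) / τ) /
        (qGamma (2 * τ) (-(2 * τ)⁻¹ + β + σ + Complex.I * lam - x - (y : ℂ) / τ) *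
          qGamma (2 * τ) (1 - (2 * τ)⁻¹ + σ + Complex.I * lam + x + (y : ℂ) / τ))) *
      (qGamma (2 * τ) (-1 + (2 * τ)⁻¹ + α + ρ + Complex.I * lam - (y : ℂ) / τ) *
          qGamma (2 * τ) ((2 * τ)⁻¹ + ρ + Complex.I * lam + (y : ℂ) / τ) /
        (qGamma (2 * τ) (1 + (2 * τ)⁻¹ + α + ρ - Complex.I * lam + (y : ℂ) / τ) *
          qGamma (2 * τ) ((2 * τ)⁻¹ + ρ - Complex.I * lam - (y : ℂ) / τ)))

/-!
Up to a constant, the integrand of `φ_λ(x)` at `v = y / τ` is an exponential times four quotients of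
`q²`-Pochhammer symbols, each of which picks up an elementary factor when its argument moves by `2`.
Applying the difference operator minus the eigenvalue to the integrand is therefore a multiplication
by a rational function of `q^v`, and the outcome telescopes: it is `G (v + 2) - G v`, where `G` is
the integrand multiplied by elementary factors and by an explicit Laurent polynomial in `q^v` with
three terms. Since `α - β` is an even integer, `G` has period `1 / τ`, and it is holomorphic between
the two contours, so that shifting the contour shows that the integral of `G (v + 2) - G v`
vanishes.
-/

/-! ### The telescoping identity for Laurent polynomials -/

/-- The elementary factor `(1 - c w) (1 - c w⁻¹)` of the Askey-Wilson coefficients. -/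
def pairFactor {K : Type*} [Field K] (c w : K) : K := (1 - c * w) * (1 - c / w)

theorem pairFactor_inv {K : Type*} [Field K] (c w : K) : pairFactor c w⁻¹ = pairFactor c w := by
  simp only [pairFactor, div_eq_mul_inv, inv_inv]
  ring

/-- The multiplicative parameters of the difference equation. In the application they are
`q = q^1`, `X = q^x`, `s = q^σ`, `r = q^ρ`, `k = q^(β+σ)`, `g = q^(α+ρ)` and `L = q^(iλ)`. -/
structure AWParam (K : Type*) [Field K] where
  q : K
  X : K
  s : K
  r : K
  k : K
  g : K
  L : K
  q_ne : q ≠ 0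
  X_ne : X ≠ 0
  s_ne : s ≠ 0
  r_ne : r ≠ 0
  k_ne : k ≠ 0
  g_ne : g ≠ 0
  L_ne : L ≠ 0

namespace AWParam

variable {K : Type*} [Field K] (P : AWParam K)

/-- The symmetry `x ↦ -x`, `σ ↔ β + σ`, `ρ ↔ α + ρ` of the problem. -/
def swap : AWParam K where
  q := P.q
  X := P.X⁻¹
  s := P.k
  r := P.g
  k := P.s
  g := P.r
  L := P.L
  q_ne := P.q_ne
  X_ne := inv_ne_zero P.X_ne
  s_ne := P.k_ne
  r_ne := P.g_ne
  k_ne := P.s_ne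
  g_ne := P.r_ne
  L_ne := P.L_ne

theorem swap_swap : P.swap.swap = P := by
  simp only [swap, inv_inv]

/-- The common denominator of the coefficients of the difference equation. -/
def den : K := (P.X⁻¹ - P.X) * (1 - P.q ^ 2 * P.X ^ 2) * (1 - P.q ^ 2 / P.X ^ 2)

theorem den_ne_zero_iff :
    P.den ≠ 0 ↔ 1 - P.X ^ 2 ≠ 0 ∧ 1 - P.q ^ 2 * P.X ^ 2 ≠ 0 ∧ 1 - P.q ^ 2 / P.X ^ 2 ≠ 0 := by
  have hX := P.X_ne
  rw [den, show P.X⁻¹ - P.X = (1 - P.X ^ 2) / P.X by field_simp]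
  simp only [mul_ne_zero_iff, div_ne_zero_iff, hX, ne_eq, not_false_iff, and_true, and_assoc]

theorem den_swap : P.swap.den = -P.den := by
  simp only [den, swap, inv_inv, inv_pow, div_inv_eq_mul, ← div_eq_mul_inv]
  ring

/-- The coefficient `B(x)`, without the factor `q^(-β) = s / k` and multiplied by `P.den`. By the
symmetry `swap`, it also determines `D(x)`. -/
def shiftCoeff : K :=
  pairFactor (P.q * P.X * P.s) P.r * pairFactor (P.q * P.X / P.s) P.r *
    (1 - P.q ^ 2 / P.X ^ 2) / P.X

/-- The numerator of the Askey-Wilson coefficient `A(y)`, where `Y = q^y`. -/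
def awNum (Y : K) : K := pairFactor (P.q * Y * P.s) P.r * pairFactor (P.q * Y / P.k) P.g

/-- The eigenvalue `E(λ;β)`. -/
def eigenvalue : K :=
  -1 - P.q ^ 2 * P.s ^ 2 / P.k ^ 2 + P.q * P.s / P.k * (P.L ^ 2 + (P.L ^ 2)⁻¹)

/-- The coefficient of `z` in the telescoping certificate `P.cert z`. -/
def certOne : K :=
  P.q * P.X ^ 2 / P.L * (P.q * P.X * (P.s + P.s⁻¹) - (P.r + P.r⁻¹)) * (1 - P.q ^ 2 / P.X ^ 2) -
    P.q * P.L * (P.q * (P.g + P.g⁻¹) - P.X * (P.k + P.k⁻¹)) * (1 - P.q ^ 2 * P.X ^ 2)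

/-- The constant coefficient of the telescoping certificate `P.cert z`. -/
def certZero : K :=
  P.q ^ 2 * P.X * (P.r + P.r⁻¹) * (P.k + P.k⁻¹) * (1 - P.q ^ 2 / P.X ^ 2) +
    P.q ^ 2 / P.X * (P.g + P.g⁻¹) * (P.s + P.s⁻¹) * (1 - P.q ^ 2 * P.X ^ 2) +
    ((P.L ^ 2)⁻¹ - P.q ^ 2 * P.L ^ 2) * (1 - P.q ^ 2 * P.X ^ 2) * (1 - P.q ^ 2 / P.X ^ 2) -
    P.q * (1 - P.q ^ 4) * (P.s + P.s⁻¹) * (P.k + P.k⁻¹)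

/-- The Laurent polynomial whose product with a quotient of `q`-Pochhammer symbols is the
telescoping certificate of the difference equation. It is the one with three terms for which the
left-hand side of `shift_cert_sub_shiftCoeff` is divisible by a `pairFactor`. -/
def cert (z : K) : K := P.certOne * z + P.certZero + P.q * P.swap.certOne / z

/-- The constant coefficient of the Laurent polynomial `P.quot z`. -/
def quotZero : K :=
  P.certZero / (P.q * P.X) +
    P.certOne * ((P.s + P.s⁻¹) - P.q * P.X * (P.r + P.r⁻¹)) / (P.q * P.L * P.X ^ 2) -
    P.shiftCoeff / (P.q * P.L ^ 2)

/-- The quotient in the division `shift_cert_sub_shiftCoeff`. -/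
def quot (z : K) : K :=
  P.q * P.certOne / P.X * z + P.quotZero + P.swap.certOne * P.X / z

theorem certZero_swap : P.swap.certZero = P.certZero := by
  have := P.X_ne
  simp only [certZero, swap]
  field_simp
  ring

theorem cert_swap {z : K} (hz : z ≠ 0) : P.swap.cert (P.q / z) = P.cert z := by
  have := P.q_ne
  simp only [cert, swap_swap, certZero_swap]
  simp only [swap]
  field_simp
  ring

theorem quot_sub_quot_swap {z : K} (hz : z ≠ 0) :
    P.quot z - P.swap.quot (P.q * z)⁻¹ = P.quotZero - P.swap.quotZero := by
  have := P.q_ne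
  have := P.X_ne
  simp only [quot, swap_swap]
  simp only [swap]
  field_simp
  ring

theorem shift_cert_sub_shiftCoeff {z : K} (hz : z ≠ 0) :
    P.k / P.r * P.cert (P.q ^ 2 * z) * pairFactor P.r (P.q * P.L * z) -
        P.shiftCoeff * pairFactor P.k (P.q * P.X * z / P.L) =
      P.k / P.s * pairFactor P.s (P.q ^ 2 * P.L * P.X * z) * P.quot z := by
  obtain ⟨q, X, s, r, k, g, L, hq, hX, hs, hr, hk, hg, hL⟩ := P
  simp only [quot, quotZero, cert, certOne, certZero, swap, shiftCoeff, pairFactor]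
  field_simp
  ring

theorem cert_sub_shiftCoeff_swap {z : K} (hz : z ≠ 0) :
    P.s / P.g * P.cert z * pairFactor P.g (P.L / z) -
        P.swap.shiftCoeff * pairFactor P.s (P.L * P.X * z)⁻¹ =
      P.s / P.k * pairFactor P.k (P.q * P.L / (P.X * z)) * P.swap.quot (P.q * z)⁻¹ := by
  have hq := P.q_ne
  have h := P.swap.shift_cert_sub_shiftCoeff (inv_ne_zero (mul_ne_zero hq hz))
  rw [show P.swap.q ^ 2 * (P.q * z)⁻¹ = P.q / z by simp only [swap]; field_simp,
    P.cert_swap hz] at h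
  convert h using 4 <;> simp only [swap] <;> field_simp

theorem quotZero_sub_quotZero_swap :
    P.s / P.k * (P.quotZero - P.swap.quotZero) =
      P.X * (1 - P.q ^ 2 * P.X ^ 2) * P.awNum P.X⁻¹ -
        (1 - P.q ^ 2 / P.X ^ 2) / P.X * P.awNum P.X - P.eigenvalue * P.den := by
  obtain ⟨q, X, s, r, k, g, L, hq, hX, hs, hr, hk, hg, hL⟩ := P
  simp only [quotZero, certOne, certZero, swap, shiftCoeff, awNum, den, eigenvalue,
    pairFactor]
  field_simp
  ring

theorem cert_telescope {z : K} (hz : z ≠ 0) :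
    P.s / P.k * P.shiftCoeff *
        (P.s / P.k * (pairFactor P.k (P.q * P.X * z / P.L) *
          pairFactor P.k (P.q * P.L / (P.X * z)))) +
        P.s / P.k * (P.quotZero - P.swap.quotZero) *
          (pairFactor P.k (P.q * P.L / (P.X * z)) * pairFactor P.s (P.q ^ 2 * P.L * P.X * z)) -
        P.s / P.k * P.swap.shiftCoeff *
          (P.k / P.s * (pairFactor P.s (P.L * P.X * z)⁻¹ *
            pairFactor P.s (P.q ^ 2 * P.L * P.X * z))) =
      P.s / P.g * (P.cert (P.q ^ 2 * z) * (P.s / P.k * (P.g / P.r) *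
            (pairFactor P.k (P.q * P.L / (P.X * z)) * pairFactor P.r (P.q * P.L * z))) -
          P.cert z * (pairFactor P.s (P.q ^ 2 * P.L * P.X * z) * pairFactor P.g (P.L / z))) := by
  have hs := P.s_ne
  have hk := P.k_ne
  have hg := P.g_ne
  have h₁ := P.shift_cert_sub_shiftCoeff hz
  have h₂ := P.cert_sub_shiftCoeff_swap hz
  rw [← P.quot_sub_quot_swap hz]
  have hgg : P.s / P.g * (P.s / P.k * (P.g / P.r)) = P.s ^ 2 / P.k ^ 2 * (P.k / P.r) := by
    field_simp
  have hks : P.s / P.k * (P.k / P.s) = 1 := by field_simp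
  have hss : P.s ^ 2 / P.k ^ 2 * (P.k / P.s) = P.s / P.k := by field_simp
  generalize pairFactor P.k (P.q * P.L / (P.X * z)) = M at *
  generalize pairFactor P.s (P.q ^ 2 * P.L * P.X * z) = T at *
  linear_combination -(P.s ^ 2 / P.k ^ 2) * M * h₁ + T * h₂ -
    P.cert (P.q ^ 2 * z) * M * pairFactor P.r (P.q * P.L * z) * hgg -
    P.swap.shiftCoeff * pairFactor P.s (P.L * P.X * z)⁻¹ * T * hks - P.quot z * M * T * hss

end AWParam

/-! ### Quotients of `q`-Pochhammer symbols -/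

theorem qpow_ne_zero (τ u : ℂ) : qpow τ u ≠ 0 := Complex.exp_ne_zero _

theorem qpow_add (τ u v : ℂ) : qpow τ (u + v) = qpow τ u * qpow τ v := by
  simp only [qpow, mul_add, Complex.exp_add]

theorem qpow_neg (τ u : ℂ) : qpow τ (-u) = (qpow τ u)⁻¹ := by
  simp only [qpow, mul_neg, Complex.exp_neg]

theorem qpow_sub (τ u v : ℂ) : qpow τ (u - v) = qpow τ u / qpow τ v := by
  simp only [qpow, mul_sub, Complex.exp_sub]

theorem qpow_nat_mul (τ u : ℂ) (n : ℕ) : qpow τ (n * u) = qpow τ u ^ n := by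
  simp only [qpow, ← Complex.exp_nat_mul]
  ring_nf

theorem qpow_two_mul (τ u : ℂ) : qpow τ (2 * u) = qpow τ u ^ 2 := by
  exact_mod_cast qpow_nat_mul τ u 2

theorem qpow_two (τ : ℂ) : qpow τ 2 = qpow τ 1 ^ 2 := by
  simpa only [mul_one] using qpow_two_mul τ 1

@[fun_prop]
theorem differentiable_qpow (τ : ℂ) : Differentiable ℂ (qpow τ) := by
  unfold qpow
  fun_prop

theorem norm_qpow_lt_one {τ u : ℂ} (h : 0 < (τ * u).im) : ‖qpow τ u‖ < 1 := by
  have hre : (2 * (Real.pi : ℂ) * I * τ * u).re = -(2 * Real.pi * (τ * u).im) := by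
    rw [show 2 * (Real.pi : ℂ) * I * τ * u = ((2 * Real.pi : ℝ) : ℂ) * (I * (τ * u)) by
      push_cast; ring, re_ofReal_mul, I_mul_re]
    ring
  rw [qpow, norm_exp, Real.exp_lt_one_iff, hre, Left.neg_neg_iff]
  positivity

theorem one_sub_qpow_ne_zero {τ u : ℂ} (h : 0 < (τ * u).im) : 1 - qpow τ u ≠ 0 := by
  intro h0
  have := norm_qpow_lt_one h
  rw [← sub_eq_zero.1 h0, norm_one] at this
  exact this.false

theorem qpow_int_mul_inv {τ : ℂ} (hτ : τ ≠ 0) (n : ℤ) : qpow τ (n * τ⁻¹) = 1 := by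
  rw [qpow, show 2 * (Real.pi : ℂ) * I * τ * (n * τ⁻¹) = n * (2 * Real.pi * I) by field_simp,
    exp_int_mul_two_pi_mul_I]

theorem qpow_half_inv {τ : ℂ} (hτ : τ ≠ 0) : qpow τ (2 * τ)⁻¹ = -1 := by
  rw [qpow, show 2 * (Real.pi : ℂ) * I * τ * (2 * τ)⁻¹ = Real.pi * I by field_simp, exp_pi_mul_I]

theorem qpow_periodic {τ : ℂ} (hτ : τ ≠ 0) : Function.Periodic (qpow τ) τ⁻¹ := fun u => by
  rw [qpow_add, ← one_mul τ⁻¹, ← Int.cast_one, qpow_int_mul_inv hτ, mul_one]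

/-- The infinite `q`-Pochhammer symbol `(w; p)_∞`. -/
def qPoch (p w : ℂ) : ℂ := ∏' n : ℕ, (1 - w * p ^ n)

theorem summable_norm_mul_pow {p : ℂ} (hp : ‖p‖ < 1) (w : ℂ) :
    Summable fun n : ℕ => ‖-(w * p ^ n)‖ := by
  simpa using (summable_geometric_of_lt_one (norm_nonneg _) hp).mul_left ‖w‖

theorem qPoch_eq_one_sub_mul {p : ℂ} (hp : ‖p‖ < 1) (w : ℂ) :
    qPoch p w = (1 - w) * qPoch p (w * p) := by
  have hmul : Multipliable fun n : ℕ => 1 - w * p ^ (n + 1) := by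
    simpa only [sub_eq_add_neg, pow_succ', mul_assoc] using
      multipliable_one_add_of_summable (summable_norm_mul_pow hp (w * p))
  have h := tprod_eq_zero_mul' (f := fun n => 1 - w * p ^ n) hmul
  simpa only [qPoch, pow_zero, mul_one, pow_succ', mul_assoc] using h

theorem qPoch_ne_zero {p w : ℂ} (hp : ‖p‖ < 1) (hw : ‖w‖ < 1) : qPoch p w ≠ 0 := by
  simp only [qPoch, sub_eq_add_neg]
  refine tprod_one_add_ne_zero_of_summable (fun n hn => ?_) (summable_norm_mul_pow hp w)
  have hlt : ‖w * p ^ n‖ < 1 := by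
    rw [norm_mul, norm_pow]
    exact mul_lt_one_of_nonneg_of_lt_one_left (norm_nonneg _) hw
      (pow_le_one₀ (norm_nonneg _) hp.le)
  rw [show w * p ^ n = 1 by linear_combination -hn, norm_one] at hlt
  exact hlt.false

theorem differentiable_qPoch {p : ℂ} (hp : ‖p‖ < 1) : Differentiable ℂ (qPoch p) := by
  intro w₀
  have hw₀ : Metric.ball (0 : ℂ) (‖w₀‖ + 1) ∈ nhds w₀ := Metric.isOpen_ball.mem_nhds (by simp)
  have hprod : HasProdLocallyUniformlyOn (fun (n : ℕ) (w : ℂ) => 1 + -(w * p ^ n))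
      (fun w => ∏' n : ℕ, (1 + -(w * p ^ n))) (Metric.ball 0 (‖w₀‖ + 1)) := by
    refine Summable.hasProdLocallyUniformlyOn_nat_one_add (u := fun n => (‖w₀‖ + 1) * ‖p‖ ^ n)
      Metric.isOpen_ball ((summable_geometric_of_lt_one (norm_nonneg _) hp).mul_left _)
      (.of_forall fun n w hw => ?_) (fun n => by fun_prop)
    rw [norm_neg, norm_mul, norm_pow]
    gcongr
    exact (mem_ball_zero_iff.1 hw).le
  have hdiff := hprod.differentiableOn (.of_forall fun s => by
    simpa [Finset.prod_fn] using DifferentiableOn.finsetProd fun _ _ => by fun_prop)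
    Metric.isOpen_ball
  have h := hdiff.differentiableAt hw₀
  simp only [← sub_eq_add_neg] at h
  exact h

/-- The quotient `(q^(c+w); q²)_∞ / (q^(c+2-w); q²)_∞`, which is, up to a Gaussian factor, a
quotient of two values of `Γ_{2τ}`; see `qGamma_div_qGamma`. -/
def gammaQuot (τ c w : ℂ) : ℂ :=
  qPoch (qpow τ 2) (qpow τ (c + w)) / qPoch (qpow τ 2) (qpow τ (c + 2 - w))

theorem qGamma_two_mul (τ x : ℂ) :
    qGamma (2 * τ) x = qpow τ (-(x ^ 2) / 8) / qPoch (qpow τ 2) (-qpow τ (x + 1)) := by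
  have hbase : ∀ u, qpow (2 * τ) u = qpow τ (2 * u) := fun u => by
    simp only [qpow]
    ring_nf
  simp only [qGamma, qPoch, hbase]
  congr 2
  · ring
  · funext n
    rw [show 2 * ((x + 1) / 2 + (n : ℂ)) = x + 1 + n * 2 by ring, qpow_add, qpow_nat_mul]
    ring

theorem qGamma_div_qGamma {τ h a b c w : ℂ} (hh : qpow τ h = -1) (ha : a = c - h - w)
    (hb : b = c - h + w) :
    qGamma (2 * τ) a / qGamma (2 * τ) b =
      qpow τ ((c - h) * w / 2) * gammaQuot τ c (w + 1) := by
  have hneg : ∀ u, -qpow τ u = qpow τ (u + h) := fun u => by rw [qpow_add, hh, mul_neg_one]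
  rw [qGamma_two_mul, qGamma_two_mul, hneg, hneg, gammaQuot,
    show (c - h) * w / 2 = -(a ^ 2) / 8 - -(b ^ 2) / 8 by rw [ha, hb]; ring, qpow_sub,
    show b + 1 + h = c + (w + 1) by rw [hb]; ring,
    show a + 1 + h = c + 2 - (w + 1) by rw [ha]; ring]
  simp only [div_eq_mul_inv, mul_inv, inv_inv]
  ring

theorem gammaQuot_periodic {τ : ℂ} (hτ : τ ≠ 0) (c : ℂ) :
    Function.Periodic (gammaQuot τ c) τ⁻¹ := fun w => by
  rw [gammaQuot, gammaQuot, ← add_assoc, qpow_periodic hτ, ← sub_sub,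
    (qpow_periodic hτ).sub_eq]

theorem im_mul_ofNat (z : ℂ) (n : ℕ) [n.AtLeastTwo] :
    (z * ofNat(n)).im = z.im * OfNat.ofNat n := by
  simp

section UpperHalfPlane

variable {τ : ℂ} (hτ : 0 < τ.im)
include hτ

theorem ne_zero_of_im_pos : τ ≠ 0 :=
  ne_of_apply_ne im hτ.ne'

theorem norm_qpow_two_lt_one : ‖qpow τ 2‖ < 1 :=
  norm_qpow_lt_one (by simpa using hτ)

theorem gammaQuot_eq_pairFactor_mul {c w : ℂ} (h : 0 < (τ * (c - w)).im) :
    gammaQuot τ c w = pairFactor (qpow τ c) (qpow τ w) * gammaQuot τ c (w + 2) := by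
  have hp := norm_qpow_two_lt_one hτ
  have hne := one_sub_qpow_ne_zero h
  rw [gammaQuot, gammaQuot, qPoch_eq_one_sub_mul hp (qpow τ (c + w)), ← qpow_add,
    show c + 2 - (w + 2) = c - w by ring, qPoch_eq_one_sub_mul hp (qpow τ (c - w)), ← qpow_add,
    pairFactor, ← qpow_add, ← qpow_sub, add_assoc c w, sub_add_eq_add_sub]
  field_simp

theorem gammaQuot_eq_pairFactor_mul_pairFactor_mul {c w : ℂ} (h : 0 < (τ * (c - (w + 2))).im) :
    gammaQuot τ c w = pairFactor (qpow τ c) (qpow τ w) *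
      pairFactor (qpow τ c) (qpow τ (w + 2)) * gammaQuot τ c (w + 4) := by
  have h' : 0 < (τ * (c - w)).im := by
    simp only [mul_sub, mul_add, sub_im, add_im, im_mul_ofNat] at h ⊢
    linarith
  rw [gammaQuot_eq_pairFactor_mul hτ h', gammaQuot_eq_pairFactor_mul hτ h, mul_assoc, add_assoc w]
  norm_num

theorem differentiableAt_gammaQuot {c w : ℂ} (h : 0 < (τ * (c + 2 - w)).im) :
    DifferentiableAt ℂ (gammaQuot τ c) w := by
  have hp := norm_qpow_two_lt_one hτ
  have hP := differentiable_qPoch hp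
  unfold gammaQuot
  exact DifferentiableAt.div (by fun_prop) (by fun_prop) (qPoch_ne_zero hp (norm_qpow_lt_one h))

end UpperHalfPlane

/-! ### The integrand and its telescoping certificate -/

/-- The multiplicative parameters attached to `(τ, iλ, α, ρ, β, σ, x)`, where `l = iλ`. -/
@[simps]
def awParam (τ l α ρ β σ x : ℂ) : AWParam ℂ where
  q := qpow τ 1
  X := qpow τ x
  s := qpow τ σ
  r := qpow τ ρ
  k := qpow τ (β + σ)
  g := qpow τ (α + ρ)
  L := qpow τ l
  q_ne := qpow_ne_zero _ _
  X_ne := qpow_ne_zero _ _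
  s_ne := qpow_ne_zero _ _
  r_ne := qpow_ne_zero _ _
  k_ne := qpow_ne_zero _ _
  g_ne := qpow_ne_zero _ _
  L_ne := qpow_ne_zero _ _

section Kernel

variable (τ l α ρ β σ x v : ℂ)

/-- The integrand of `φ_λ(x)` at `v = y / τ`, up to a factor independent of `x` and `v`. -/
def phiKernel : ℂ :=
  qpow τ ((α * v - β * (x + v)) / 2) * gammaQuot τ (β + σ) (l + 1 - x - v) *
    gammaQuot τ σ (l + 2 + x + v) * gammaQuot τ ρ (1 - l - v) * gammaQuot τ (α + ρ) (2 - l + v)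

/-- The common factor of `phiKernel` at `x - 2`, `x` and `x + 2`. -/
def kernelBase : ℂ :=
  qpow τ ((α * v - β * (x + v)) / 2) * gammaQuot τ (β + σ) (l + 3 - x - v) *
    gammaQuot τ σ (l + 4 + x + v) * gammaQuot τ ρ (1 - l - v) * gammaQuot τ (α + ρ) (2 - l + v)

/-- The function of `v` whose increments `v ↦ v + 2` are, up to the factor `(awParam ..).den`, the
values of the operator `B T² + C + D T⁻² - E` on the kernel, where `T² f(x) = f(x + 2)`. -/
def phiCert : ℂ :=
  qpow τ σ / qpow τ (α + ρ) * (awParam τ l α ρ β σ x).cert (qpow τ v) *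
    (qpow τ ((α * v - β * (x + v)) / 2) * gammaQuot τ (β + σ) (l + 3 - x - v) *
      gammaQuot τ σ (l + 2 + x + v) * gammaQuot τ ρ (1 - l - v) * gammaQuot τ (α + ρ) (v - l))

theorem exists_phiMat_eq_mul_integral_phiKernel (hτ : τ ≠ 0) (lam : ℂ) :
    ∃ κ, ∀ x, phiMat τ lam α ρ β σ x =
      κ * ∫ y in (0 : ℝ)..1, phiKernel τ (I * lam) α ρ β σ x (y / τ) := by
  have hh : qpow τ (2 * τ)⁻¹ = -1 := qpow_half_inv hτ
  have hh' : qpow τ (-(2 * τ)⁻¹) = -1 := by rw [qpow_neg, hh, inv_neg_one]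
  simp only [phiMat]
  generalize (2 * τ)⁻¹ = h at *
  generalize I * lam = l
  refine ⟨qpow τ ((β * l + (σ - h) * (1 + 2 * l) + α * (1 - l) + (ρ + h) * (1 - 2 * l)) / 2),
    fun x => ?_⟩
  rw [← intervalIntegral.integral_const_mul]
  refine intervalIntegral.integral_congr fun y _ => ?_
  generalize (y : ℂ) / τ = v
  have hgauss : qpow τ ((β + σ - h) * (l - x - v) / 2) * qpow τ ((σ - h) * (1 + l + x + v) / 2) *
        qpow τ ((α + ρ - -h) * (1 - l + v) / 2) * qpow τ ((ρ - -h) * (-l - v) / 2) =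
      qpow τ ((β * l + (σ - h) * (1 + 2 * l) + α * (1 - l) + (ρ + h) * (1 - 2 * l)) / 2) *
        qpow τ ((α * v - β * (x + v)) / 2) := by
    simp only [← qpow_add]
    ring_nf
  rw [mul_div_mul_comm, mul_div_mul_comm,
    qGamma_div_qGamma hh (c := β + σ) (w := l - x - v) (by ring) (by ring),
    qGamma_div_qGamma hh (c := σ) (w := 1 + l + x + v) (by ring) (by ring),
    qGamma_div_qGamma hh' (c := α + ρ) (w := 1 - l + v) (by ring) (by ring),
    qGamma_div_qGamma hh' (c := ρ) (w := -l - v) (by ring) (by ring), phiKernel,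
    show l + 1 - x - v = l - x - v + 1 by ring, show l + 2 + x + v = 1 + l + x + v + 1 by ring,
    show 1 - l - v = -l - v + 1 by ring, show 2 - l + v = 1 - l + v + 1 by ring]
  linear_combination gammaQuot τ (β + σ) (l - x - v + 1) * gammaQuot τ σ (1 + l + x + v + 1) *
    gammaQuot τ ρ (-l - v + 1) * gammaQuot τ (α + ρ) (1 - l + v + 1) * hgauss

variable {τ l α ρ β σ x v}

theorem phiKernel_eq (hτ : 0 < τ.im) (hβ : 0 < (τ * (β + σ - (l + 1 - x - v))).im)
    (hσ : 0 < (τ * (σ - (l + 2 + x + v))).im) :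
    phiKernel τ l α ρ β σ x v =
      pairFactor (qpow τ (β + σ)) (qpow τ (l + 1 - x - v)) *
        pairFactor (qpow τ σ) (qpow τ (l + 2 + x + v)) * kernelBase τ l α ρ β σ x v := by
  rw [phiKernel, gammaQuot_eq_pairFactor_mul hτ hβ, gammaQuot_eq_pairFactor_mul hτ hσ, kernelBase]
  ring_nf

theorem phiKernel_add_two (hτ : 0 < τ.im) (hβ : 0 < (τ * (β + σ - (l + 1 - x - v))).im) :
    phiKernel τ l α ρ β σ (x + 2) v =
      (qpow τ β)⁻¹ * (pairFactor (qpow τ (β + σ)) (qpow τ (l - 1 - x - v)) *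
        pairFactor (qpow τ (β + σ)) (qpow τ (l + 1 - x - v))) * kernelBase τ l α ρ β σ x v := by
  rw [phiKernel, show (α * v - β * (x + 2 + v)) / 2 = (α * v - β * (x + v)) / 2 - β by ring,
    qpow_sub, gammaQuot_eq_pairFactor_mul_pairFactor_mul hτ (c := β + σ)
      (by convert hβ using 4; ring), kernelBase]
  ring_nf

theorem phiKernel_sub_two (hτ : 0 < τ.im) (hσ : 0 < (τ * (σ - (l + 2 + x + v))).im) :
    phiKernel τ l α ρ β σ (x - 2) v =
      qpow τ β * (pairFactor (qpow τ σ) (qpow τ (l + x + v)) *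
        pairFactor (qpow τ σ) (qpow τ (l + 2 + x + v))) * kernelBase τ l α ρ β σ x v := by
  rw [phiKernel, show (α * v - β * (x - 2 + v)) / 2 = β + (α * v - β * (x + v)) / 2 by ring,
    qpow_add, gammaQuot_eq_pairFactor_mul_pairFactor_mul hτ (c := σ)
      (by convert hσ using 4; ring), kernelBase]
  ring_nf

theorem phiCert_eq (hτ : 0 < τ.im) (hα : 0 < (τ * (α + ρ - (v - l))).im)
    (hσ : 0 < (τ * (σ - (l + 2 + x + v))).im) :
    phiCert τ l α ρ β σ x v =
      qpow τ σ / qpow τ (α + ρ) * (awParam τ l α ρ β σ x).cert (qpow τ v) *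
        (pairFactor (qpow τ σ) (qpow τ (l + 2 + x + v)) *
          pairFactor (qpow τ (α + ρ)) (qpow τ (v - l))) * kernelBase τ l α ρ β σ x v := by
  rw [phiCert, gammaQuot_eq_pairFactor_mul hτ hα, gammaQuot_eq_pairFactor_mul hτ hσ, kernelBase]
  ring_nf

theorem phiCert_add_two (hτ : 0 < τ.im) (hβ : 0 < (τ * (β + σ - (l + 1 - x - v))).im)
    (hρ : 0 < (τ * (ρ - (-1 - l - v))).im) :
    phiCert τ l α ρ β σ x (v + 2) =
      qpow τ σ / qpow τ (α + ρ) * (awParam τ l α ρ β σ x).cert (qpow τ 2 * qpow τ v) *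
        (qpow τ (α - β) * (pairFactor (qpow τ (β + σ)) (qpow τ (l + 1 - x - v)) *
          pairFactor (qpow τ ρ) (qpow τ (-1 - l - v)))) * kernelBase τ l α ρ β σ x v := by
  rw [phiCert, ← qpow_add, add_comm 2 v, show (α * (v + 2) - β * (x + (v + 2))) / 2 =
      α - β + (α * v - β * (x + v)) / 2 by ring, qpow_add τ (α - β),
    show l + 3 - x - (v + 2) = l + 1 - x - v by ring,
    show 1 - l - (v + 2) = -1 - l - v by ring,
    gammaQuot_eq_pairFactor_mul hτ hβ, gammaQuot_eq_pairFactor_mul hτ hρ, kernelBase]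
  ring_nf

end Kernel

section Telescope

variable {τ l α ρ β σ x v : ℂ}

theorem awParam_cert_telescope (P : AWParam ℂ) (hP : P = awParam τ l α ρ β σ x) :
    qpow τ (-β) * P.shiftCoeff *
        ((qpow τ β)⁻¹ * (pairFactor (qpow τ (β + σ)) (qpow τ (l - 1 - x - v)) *
          pairFactor (qpow τ (β + σ)) (qpow τ (l + 1 - x - v)))) +
        qpow τ (-β) * (P.quotZero - P.swap.quotZero) *
          (pairFactor (qpow τ (β + σ)) (qpow τ (l + 1 - x - v)) *
            pairFactor (qpow τ σ) (qpow τ (l + 2 + x + v))) -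
        qpow τ (-β) * P.swap.shiftCoeff *
          (qpow τ β * (pairFactor (qpow τ σ) (qpow τ (l + x + v)) *
            pairFactor (qpow τ σ) (qpow τ (l + 2 + x + v)))) =
      qpow τ σ / qpow τ (α + ρ) * (P.cert (qpow τ 2 * qpow τ v) * (qpow τ (α - β) *
            (pairFactor (qpow τ (β + σ)) (qpow τ (l + 1 - x - v)) *
              pairFactor (qpow τ ρ) (qpow τ (-1 - l - v)))) -
          P.cert (qpow τ v) * (pairFactor (qpow τ σ) (qpow τ (l + 2 + x + v)) *
            pairFactor (qpow τ (α + ρ)) (qpow τ (v - l)))) := by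
  have h := P.cert_telescope (qpow_ne_zero τ v)
  rw [← pairFactor_inv P.k (P.q * P.X * _ / _), ← pairFactor_inv P.s (P.L * P.X * _)⁻¹,
    ← pairFactor_inv P.r, ← pairFactor_inv P.g] at h
  subst hP
  simp only [awParam_q, awParam_X, awParam_s, awParam_r, awParam_k, awParam_g, awParam_L,
    ← qpow_two, ← qpow_add, ← qpow_sub, ← qpow_neg] at h ⊢
  ring_nf at h ⊢
  exact h

theorem phiKernel_telescope (hτ : 0 < τ.im) (hβ : 0 < (τ * (β + σ - (l + 1 - x - v))).im)
    (hσ : 0 < (τ * (σ - (l + 2 + x + v))).im) (hα : 0 < (τ * (α + ρ - (v - l))).im)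
    (hρ : 0 < (τ * (ρ - (-1 - l - v))).im) (P : AWParam ℂ) (hP : P = awParam τ l α ρ β σ x) :
    qpow τ (-β) * P.shiftCoeff * phiKernel τ l α ρ β σ (x + 2) v +
        qpow τ (-β) * (P.quotZero - P.swap.quotZero) * phiKernel τ l α ρ β σ x v -
        qpow τ (-β) * P.swap.shiftCoeff * phiKernel τ l α ρ β σ (x - 2) v =
      phiCert τ l α ρ β σ x (v + 2) - phiCert τ l α ρ β σ x v := by
  rw [phiKernel_add_two hτ hβ, phiKernel_eq hτ hβ hσ, phiKernel_sub_two hτ hσ,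
    phiCert_add_two hτ hβ hρ, phiCert_eq hτ hα hσ, ← hP]
  linear_combination kernelBase τ l α ρ β σ x v * awParam_cert_telescope (v := v) P hP

end Telescope

section Coefficients

variable {τ lam l α ρ β σ x : ℂ}

theorem awParam_den_ne_zero (h₁ : qpow τ (2 * x) ≠ 1) (h₂ : qpow τ (2 * x) ≠ qpow τ 2)
    (h₃ : qpow τ (2 * x) ≠ qpow τ (-2)) : (awParam τ l α ρ β σ x).den ≠ 0 := by
  have hX := qpow_ne_zero τ x
  have hq := qpow_ne_zero τ 1
  rw [AWParam.den_ne_zero_iff, awParam_X, awParam_q]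
  simp only [qpow_neg, qpow_two_mul, qpow_two] at h₁ h₂ h₃
  refine ⟨sub_ne_zero.2 h₁.symm, fun h => h₃ ?_, fun h => h₂ ?_⟩
  · field_simp
    linear_combination -h
  · field_simp at h
    linear_combination h

theorem coefB_mul_den (β' : ℂ) (hden : (awParam τ l α ρ β σ x).den ≠ 0) :
    coefB τ β' (1 + ρ + σ) (1 - ρ + σ) x * (awParam τ l α ρ β σ x).den =
      qpow τ (-β') * (awParam τ l α ρ β σ x).shiftCoeff := by
  have hX := qpow_ne_zero τ x
  have hs := qpow_ne_zero τ σ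
  have hr := qpow_ne_zero τ ρ
  obtain ⟨hX2, hqX2, -⟩ := (AWParam.den_ne_zero_iff _).1 hden
  simp only [AWParam.den, AWParam.shiftCoeff, coefB, pairFactor, awParam_X, awParam_q, awParam_s,
    awParam_r, qpow_add, qpow_sub, qpow_two_mul, qpow_two] at *
  field_simp

theorem awParam_swap :
    (awParam τ l α ρ β σ x).swap = awParam τ l (-α) (α + ρ) (-β) (β + σ) (-x) := by
  simp only [AWParam.swap, awParam, qpow_neg, neg_add_cancel_left]

theorem coefD_mul_den (hden : (awParam τ l α ρ β σ x).den ≠ 0) :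
    coefD τ β (1 + α + ρ - β - σ) (1 - α - ρ - β - σ) x * (awParam τ l α ρ β σ x).den =
      -(qpow τ (-β) * (awParam τ l α ρ β σ x).swap.shiftCoeff) := by
  have hswap : coefD τ β (1 + α + ρ - β - σ) (1 - α - ρ - β - σ) x =
      coefB τ β (1 + (α + ρ) + (β + σ)) (1 - (α + ρ) + (β + σ)) (-x) := by
    unfold coefD coefB
    ring_nf
  rw [← neg_ne_zero, ← AWParam.den_swap, awParam_swap] at hden
  rw [awParam_swap, ← coefB_mul_den β hden, ← awParam_swap, AWParam.den_swap, hswap, mul_neg,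
    neg_neg]

theorem awA_eq (y : ℂ) :
    awA τ (1 + ρ + σ) (1 - ρ + σ) (1 + α + ρ - β - σ) (1 - α - ρ - β - σ) y =
      (awParam τ l α ρ β σ x).awNum (qpow τ y) /
        ((1 - qpow τ y ^ 2) * (1 - qpow τ 1 ^ 2 * qpow τ y ^ 2)) := by
  simp only [AWParam.awNum, awA, pairFactor, awParam_q, awParam_s, awParam_r, awParam_k, awParam_g,
    ← qpow_two_mul, ← qpow_add, ← qpow_sub]
  ring_nf

theorem eigenE_eq_eigenvalue :
    eigenE τ lam β = (awParam τ (I * lam) α ρ β σ x).eigenvalue := by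
  simp only [eigenE, AWParam.eigenvalue, awParam_q, awParam_s, awParam_k, awParam_L,
    ← qpow_two_mul, ← qpow_add, ← qpow_sub, ← qpow_neg]
  ring_nf

theorem coefC_sub_eigenE_mul_den (P : AWParam ℂ) (hP : P = awParam τ (I * lam) α ρ β σ x)
    (hden : P.den ≠ 0) :
    (-awA τ (1 + ρ + σ) (1 - ρ + σ) (1 + α + ρ - β - σ) (1 - α - ρ - β - σ) x -
        awA τ (1 + ρ + σ) (1 - ρ + σ) (1 + α + ρ - β - σ) (1 - α - ρ - β - σ) (-x) -
          eigenE τ lam β) * P.den = qpow τ (-β) * (P.quotZero - P.swap.quotZero) := by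
  have hX := P.X_ne
  obtain ⟨hX2, hqX2, hqX2'⟩ := P.den_ne_zero_iff.1 hden
  have hXinv : 1 - P.X⁻¹ ^ 2 ≠ 0 := by
    rwa [show 1 - P.X⁻¹ ^ 2 = -(1 - P.X ^ 2) / P.X ^ 2 by field_simp; ring,
      div_ne_zero_iff, neg_ne_zero, and_iff_left (pow_ne_zero 2 hX)]
  have hA : P.awNum P.X / ((1 - P.X ^ 2) * (1 - P.q ^ 2 * P.X ^ 2)) * P.den =
      (1 - P.q ^ 2 / P.X ^ 2) / P.X * P.awNum P.X := by
    rw [AWParam.den, div_mul_eq_mul_div, div_eq_iff (mul_ne_zero hX2 hqX2)]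
    generalize P.awNum P.X = N
    field_simp
  have hA' : P.awNum P.X⁻¹ / ((1 - P.X⁻¹ ^ 2) * (1 - P.q ^ 2 * P.X⁻¹ ^ 2)) * P.den =
      -(P.X * (1 - P.q ^ 2 * P.X ^ 2) * P.awNum P.X⁻¹) := by
    rw [inv_pow, ← div_eq_mul_inv (P.q ^ 2)] at *
    rw [AWParam.den, div_mul_eq_mul_div, div_eq_iff (mul_ne_zero hXinv hqX2')]
    generalize P.awNum P.X⁻¹ = N
    field_simp
    ring
  have hβ : qpow τ (-β) = P.s / P.k := by
    rw [hP, awParam_s, awParam_k, ← qpow_sub, sub_add_cancel_right]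
  rw [awA_eq (l := I * lam) (x := x), awA_eq (l := I * lam) (x := x), qpow_neg τ x,
    eigenE_eq_eigenvalue (α := α) (ρ := ρ) (σ := σ) (x := x), hβ, P.quotZero_sub_quotZero_swap,
    ← hP, show qpow τ x = P.X by rw [hP, awParam_X], show qpow τ 1 = P.q by rw [hP, awParam_q]]
  linear_combination -hA - hA'

end Coefficients

/-! ### Holomorphic integrals -/

section ParametricIntegral

variable {E : Type*} [NormedAddCommGroup E] [NormedSpace ℂ E]

theorem aestronglyMeasurable_deriv_of_differentiableOn {α : Type*} [MeasurableSpace α]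
    {μ : Measure α} {U : Set ℂ} (hU : IsOpen U) {f : ℂ → α → E}
    (hf : ∀ z ∈ U, AEStronglyMeasurable (f z) μ)
    (hd : ∀ᵐ y ∂μ, DifferentiableOn ℂ (f · y) U) {z₀ : ℂ} (hz₀ : z₀ ∈ U) :
    AEStronglyMeasurable (fun y => deriv (f · y) z₀) μ := by
  classical
  refine aestronglyMeasurable_of_tendsto_ae (nhdsWithin z₀ {z₀}ᶜ)
    (f := fun z y => if z ∈ U then slope (f · y) z₀ z else 0) (fun z => ?_) ?_
  · split_ifs with hz
    · exact ((hf z hz).sub (hf z₀ hz₀)).const_smul (z - z₀)⁻¹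
    · exact aestronglyMeasurable_const
  · filter_upwards [hd] with y hy
    have hslope := hasDerivAt_iff_tendsto_slope.1
      (hy.differentiableAt (hU.mem_nhds hz₀)).hasDerivAt
    refine hslope.congr' ?_
    filter_upwards [nhdsWithin_le_nhds (hU.mem_nhds hz₀)] with z hz
    rw [if_pos hz]

theorem differentiableOn_intervalIntegral {a b : ℝ} {U : Set ℂ} (hU : IsOpen U) {f : ℂ → ℝ → E}
    (hf : ContinuousOn (Function.uncurry f) (U ×ˢ Set.uIcc a b))
    (hd : ∀ y ∈ Set.uIcc a b, DifferentiableOn ℂ (f · y) U) :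
    DifferentiableOn ℂ (fun z => ∫ y in a..b, f z y) U := by
  intro z₀ hz₀
  obtain ⟨ε, hε, hball⟩ := Metric.nhds_basis_closedBall.mem_iff.1 (hU.mem_nhds hz₀)
  obtain ⟨C, hC⟩ := ((isCompact_closedBall z₀ ε).prod isCompact_uIcc).exists_bound_of_continuousOn
    (hf.mono (Set.prod_mono_left hball))
  have hcont : ∀ z ∈ U, ContinuousOn (f z) (Set.uIcc a b) := fun z hz =>
    hf.uncurry_left z hz
  have hmeas : ∀ z ∈ U, AEStronglyMeasurable (f z) (volume.restrict (Set.uIoc a b)) :=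
    fun z hz => ((hcont z hz).mono Set.uIoc_subset_uIcc).aestronglyMeasurable measurableSet_uIoc
  have hderiv : ∀ y ∈ Set.uIcc a b, ∀ z ∈ Metric.ball z₀ (ε / 2),
      ‖deriv (f · y) z‖ ≤ C / (ε / 2) := fun y hy z hz => by
    have hsub : Metric.closedBall z (ε / 2) ⊆ Metric.closedBall z₀ ε :=
      Metric.closedBall_subset_closedBall' (by linarith [Metric.mem_ball.1 hz])
    refine Complex.norm_deriv_le_of_forall_mem_sphere_norm_le (half_pos hε)
      (((hd y hy).mono (hsub.trans hball)).diffContOnCl_ball subset_rfl) fun w hw => ?_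
    exact hC (w, y) ⟨hsub (Metric.sphere_subset_closedBall hw), hy⟩
  refine (intervalIntegral.hasDerivAt_integral_of_dominated_loc_of_deriv_le (μ := volume)
    (F' := fun z y => deriv (f · y) z) (bound := fun _ => C / (ε / 2))
    (Metric.ball_mem_nhds z₀ (half_pos hε)) ?_ (hcont z₀ hz₀).intervalIntegrable
    (aestronglyMeasurable_deriv_of_differentiableOn hU hmeas ?_ hz₀) ?_ intervalIntegrable_const
    ?_).2.differentiableAt.differentiableWithinAt
  · filter_upwards [hU.mem_nhds hz₀] with z hz using hmeas z hz
  · filter_upwards [ae_restrict_mem measurableSet_uIoc] with y hy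
      using hd y (Set.uIoc_subset_uIcc hy)
  · exact .of_forall fun y hy => hderiv y (Set.uIoc_subset_uIcc hy)
  · refine .of_forall fun y hy z hz => DifferentiableAt.hasDerivAt ?_
    exact (hd y (Set.uIoc_subset_uIcc hy)).differentiableAt (hU.mem_nhds
      (hball (Metric.ball_subset_closedBall (Metric.ball_subset_ball (by linarith) hz))))

end ParametricIntegral

theorem integral_add_eq_of_periodic_of_differentiableOn {E : Type*} [NormedAddCommGroup E]
    [NormedSpace ℂ E] [CompleteSpace E] {g : ℂ → E} {c : ℂ} {T : ℝ} (hper : Function.Periodic g T)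
    (hg : DifferentiableOn ℂ g (im ⁻¹' Set.uIcc 0 c.im)) :
    ∫ y in (0 : ℝ)..T, g (y + c) = ∫ y in (0 : ℝ)..T, g y := by
  have hrect := integral_boundary_rect_eq_zero_of_differentiableOn g 0 (T + c.im * I)
    (hg.mono fun w hw => by simpa using hw.2)
  have hside : ∀ y : ℝ, g (T + y * I) = g (y * I) := fun y => by rw [add_comm, hper]
  have hline : Function.Periodic (fun y : ℝ => g (y + c.im * I)) T := fun y => by
    simp only [ofReal_add, add_right_comm _ (T : ℂ), hper _]
  have hbottom_eq_top : ∫ y in (0 : ℝ)..T, g y = ∫ y in (0 : ℝ)..T, g (y + c.im * I) := by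
    simpa [hside, sub_eq_zero] using hrect
  have hshift : ∀ y : ℝ, g (y + c) = g (↑(y + c.re) + c.im * I) := fun y => by
    rw [ofReal_add, add_assoc, re_add_im]
  simp only [hshift]
  rw [hbottom_eq_top, intervalIntegral.integral_comp_add_right
    (fun y : ℝ => g (y + c.im * I)), zero_add, add_comm T, hline.intervalIntegral_add_eq c.re 0,
    zero_add]

/-! ### The integral of the kernel -/

/-- The strip on which the integral defining `φ_λ` is holomorphic, where `l = iλ`. -/
def phiStrip (τ l β σ : ℂ) : Set ℂ :=
  {x | 0 < (τ * (1 + β + σ - l + x)).im ∧ 0 < (τ * (σ - l - x)).im}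

theorem isOpen_phiStrip (τ l β σ : ℂ) : IsOpen (phiStrip τ l β σ) :=
  IsOpen.inter (s := {x | 0 < (τ * (1 + β + σ - l + x)).im}) (t := {x | 0 < (τ * (σ - l - x)).im})
    (isOpen_lt (by fun_prop) (by fun_prop)) (isOpen_lt (by fun_prop) (by fun_prop))

section Integral

variable {τ l α ρ β σ x v : ℂ}

theorem mem_phiStrip_of_add_two_of_sub_two (hτ : 0 < τ.im) (hx : x + 2 ∈ phiStrip τ l β σ)
    (hx' : x - 2 ∈ phiStrip τ l β σ) : x ∈ phiStrip τ l β σ := by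
  obtain ⟨-, hx⟩ := hx
  obtain ⟨hx', -⟩ := hx'
  constructor <;>
  · simp only [mul_add, mul_sub, add_im, sub_im, mul_one, im_mul_ofNat] at *
    linarith

theorem differentiableAt_phiKernel (hτ : 0 < τ.im) (hρ : 0 < (τ * (1 + ρ + l)).im)
    (hα : 0 < (τ * (α + ρ + l)).im) (hx : x ∈ phiStrip τ l β σ) (hv : (τ * v).im = 0) :
    DifferentiableAt ℂ (fun p : ℂ × ℂ => phiKernel τ l α ρ β σ p.1 p.2) (x, v) := by
  obtain ⟨hβ, hσ⟩ := hx
  unfold phiKernel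
  refine .mul (.mul (.mul (.mul (by fun_prop) ?_) ?_) ?_) ?_ <;>
  · refine DifferentiableAt.fun_comp' _ (differentiableAt_gammaQuot hτ ?_) (by fun_prop)
    simp only [mul_add, mul_sub, add_im, sub_im, mul_one, im_mul_ofNat] at *
    linarith

theorem differentiableAt_phiCert (hτ : 0 < τ.im) (hρ : 0 < (τ * (1 + ρ + l)).im)
    (hα : 0 < (τ * (α + ρ + l)).im) (hx : x + 2 ∈ phiStrip τ l β σ)
    (hx' : x - 2 ∈ phiStrip τ l β σ) (hv : 0 ≤ (τ * v).im) (hv' : (τ * v).im ≤ 2 * τ.im) :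
    DifferentiableAt ℂ (phiCert τ l α ρ β σ x) v := by
  obtain ⟨-, hσ⟩ := hx
  obtain ⟨hβ, -⟩ := hx'
  have hcert : DifferentiableAt ℂ (fun v => (awParam τ l α ρ β σ x).cert (qpow τ v)) v := by
    unfold AWParam.cert
    fun_prop (disch := exact qpow_ne_zero τ v)
  unfold phiCert
  refine .mul (.mul (by fun_prop) hcert) (.mul (.mul (.mul (.mul (by fun_prop) ?_) ?_) ?_) ?_) <;>
  · refine DifferentiableAt.fun_comp' _ (differentiableAt_gammaQuot hτ ?_) (by fun_prop)
    simp only [mul_add, mul_sub, add_im, sub_im, mul_one, im_mul_ofNat] at *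
    linarith

theorem phiCert_periodic (hτ : τ ≠ 0) {n : ℤ} (hn : α - β = 2 * n) :
    Function.Periodic (phiCert τ l α ρ β σ x) τ⁻¹ := fun v => by
  have hgauss : (α * (v + τ⁻¹) - β * (x + (v + τ⁻¹))) / 2 =
      (α * v - β * (x + v)) / 2 + n * τ⁻¹ := by linear_combination τ⁻¹ / 2 * hn
  have hsub : ∀ c u, gammaQuot τ c (u - (v + τ⁻¹)) = gammaQuot τ c (u - v) := fun c u => by
    rw [← sub_sub, (gammaQuot_periodic hτ c).sub_eq]
  rw [phiCert, hgauss, qpow_add _ (_ / 2), qpow_int_mul_inv hτ, mul_one, qpow_periodic hτ, hsub,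
    hsub, ← add_assoc, gammaQuot_periodic hτ, add_sub_right_comm v, gammaQuot_periodic hτ, phiCert]

theorem integral_phiCert_add_two (hτ : 0 < τ.im) {n : ℤ} (hn : α - β = 2 * n)
    (hρ : 0 < (τ * (1 + ρ + l)).im) (hα : 0 < (τ * (α + ρ + l)).im)
    (hx : x + 2 ∈ phiStrip τ l β σ) (hx' : x - 2 ∈ phiStrip τ l β σ) :
    ∫ y in (0 : ℝ)..1, phiCert τ l α ρ β σ x (y / τ + 2) =
      ∫ y in (0 : ℝ)..1, phiCert τ l α ρ β σ x (y / τ) := by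
  have hτ0 := ne_zero_of_im_pos hτ
  have hper : Function.Periodic (fun w => phiCert τ l α ρ β σ x (w / τ)) (1 : ℝ) := fun w => by
    simp only [ofReal_one, add_div, one_div, phiCert_periodic hτ0 hn _]
  have hdiff : DifferentiableOn ℂ (fun w => phiCert τ l α ρ β σ x (w / τ))
      (im ⁻¹' Set.uIcc 0 (2 * τ).im) := fun w hw => by
    rw [← mul_div_cancel₀ w hτ0, mul_comm, im_mul_ofNat, Set.mem_preimage,
      Set.uIcc_of_le (by positivity), mul_comm τ.im] at hw
    exact ((differentiableAt_phiCert hτ hρ hα hx hx' hw.1 hw.2).fun_comp' w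
      (by fun_prop)).differentiableWithinAt
  simpa only [add_div, mul_div_cancel_right₀ _ hτ0] using
    integral_add_eq_of_periodic_of_differentiableOn hper hdiff

theorem mul_ofReal_div_im (hτ : τ ≠ 0) (y : ℝ) : (τ * (y / τ)).im = 0 := by
  rw [mul_div_cancel₀ _ hτ, ofReal_im]

theorem continuousOn_phiKernel (hτ : 0 < τ.im) (hρ : 0 < (τ * (1 + ρ + l)).im)
    (hα : 0 < (τ * (α + ρ + l)).im) (s : Set ℝ) :
    ContinuousOn (Function.uncurry fun x (y : ℝ) => phiKernel τ l α ρ β σ x (y / τ))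
      (phiStrip τ l β σ ×ˢ s) := fun p hp =>
  have hτ0 := ne_zero_of_im_pos hτ
  ((differentiableAt_phiKernel hτ hρ hα hp.1 (mul_ofReal_div_im hτ0 p.2)).continuousAt.comp
    (f := fun p : ℂ × ℝ => (p.1, (p.2 : ℂ) / τ)) (by fun_prop)).continuousWithinAt

theorem differentiableOn_integral_phiKernel (hτ : 0 < τ.im) (hρ : 0 < (τ * (1 + ρ + l)).im)
    (hα : 0 < (τ * (α + ρ + l)).im) :
    DifferentiableOn ℂ (fun x => ∫ y in (0 : ℝ)..1, phiKernel τ l α ρ β σ x (y / τ))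
      (phiStrip τ l β σ) :=
  differentiableOn_intervalIntegral (isOpen_phiStrip τ l β σ)
    (continuousOn_phiKernel hτ hρ hα _) fun y _ x hx =>
      have hτ0 := ne_zero_of_im_pos hτ
      ((differentiableAt_phiKernel hτ hρ hα hx (mul_ofReal_div_im hτ0 y)).fun_comp' x
        (f := fun x : ℂ => (x, (y : ℂ) / τ)) (by fun_prop)).differentiableWithinAt

theorem intervalIntegrable_phiKernel (hτ : 0 < τ.im) (hρ : 0 < (τ * (1 + ρ + l)).im)
    (hα : 0 < (τ * (α + ρ + l)).im) (hx : x ∈ phiStrip τ l β σ) :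
    IntervalIntegrable (fun y : ℝ => phiKernel τ l α ρ β σ x (y / τ)) volume 0 1 :=
  ContinuousOn.intervalIntegrable ((continuousOn_phiKernel hτ hρ hα _).uncurry_left x hx)

theorem intervalIntegrable_phiCert (hτ : 0 < τ.im) (hρ : 0 < (τ * (1 + ρ + l)).im)
    (hα : 0 < (τ * (α + ρ + l)).im) (hx : x + 2 ∈ phiStrip τ l β σ)
    (hx' : x - 2 ∈ phiStrip τ l β σ) (hv : 0 ≤ (τ * v).im) (hv' : (τ * v).im ≤ 2 * τ.im) :
    IntervalIntegrable (fun y : ℝ => phiCert τ l α ρ β σ x (y / τ + v)) volume 0 1 := by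
  have him : ∀ y : ℝ, (τ * (y / τ + v)).im = (τ * v).im := fun y => by
    rw [mul_add, add_im, mul_ofReal_div_im (ne_zero_of_im_pos hτ), zero_add]
  refine Continuous.intervalIntegrable (continuous_iff_continuousAt.2 fun y => ?_) 0 1
  have hdiff := differentiableAt_phiCert (v := y / τ + v) hτ hρ hα hx hx'
    (by rwa [him]) (by rwa [him])
  exact hdiff.continuousAt.comp (f := fun y : ℝ => (y : ℂ) / τ + v) (by fun_prop)

theorem phiKernel_ofReal_div_telescope (hτ : 0 < τ.im) (hρ : 0 < (τ * (1 + ρ + l)).im)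
    (hα : 0 < (τ * (α + ρ + l)).im) (hx : x + 2 ∈ phiStrip τ l β σ)
    (hx' : x - 2 ∈ phiStrip τ l β σ) (P : AWParam ℂ) (hP : P = awParam τ l α ρ β σ x) (y : ℝ) :
    qpow τ (-β) * P.shiftCoeff * phiKernel τ l α ρ β σ (x + 2) (y / τ) +
        qpow τ (-β) * (P.quotZero - P.swap.quotZero) * phiKernel τ l α ρ β σ x (y / τ) -
        qpow τ (-β) * P.swap.shiftCoeff * phiKernel τ l α ρ β σ (x - 2) (y / τ) =
      phiCert τ l α ρ β σ x (y / τ + 2) - phiCert τ l α ρ β σ x (y / τ) := by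
  have hv := mul_ofReal_div_im (ne_zero_of_im_pos hτ) y
  obtain ⟨-, hσ⟩ := hx
  obtain ⟨hβ, -⟩ := hx'
  refine phiKernel_telescope hτ ?_ ?_ ?_ ?_ P hP <;>
  · simp only [mul_add, mul_sub, mul_neg, add_im, sub_im, neg_im, mul_one, im_mul_ofNat] at *
    linarith

theorem integral_phiKernel_telescope (hτ : 0 < τ.im) {n : ℤ} (hn : α - β = 2 * n)
    (hρ : 0 < (τ * (1 + ρ + l)).im) (hα : 0 < (τ * (α + ρ + l)).im)
    (hx : x + 2 ∈ phiStrip τ l β σ) (hx' : x - 2 ∈ phiStrip τ l β σ)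
    (P : AWParam ℂ) (hP : P = awParam τ l α ρ β σ x) :
    qpow τ (-β) * P.shiftCoeff *
          (∫ y in (0 : ℝ)..1, phiKernel τ l α ρ β σ (x + 2) (y / τ)) +
        qpow τ (-β) * (P.quotZero - P.swap.quotZero) *
          (∫ y in (0 : ℝ)..1, phiKernel τ l α ρ β σ x (y / τ)) -
        qpow τ (-β) * P.swap.shiftCoeff *
          (∫ y in (0 : ℝ)..1, phiKernel τ l α ρ β σ (x - 2) (y / τ)) = 0 := by
  have hker := fun z (hz : z ∈ phiStrip τ l β σ) (c : ℂ) =>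
    (intervalIntegrable_phiKernel hτ hρ hα hz).const_mul c
  have hcert := fun v => intervalIntegrable_phiCert (v := v) hτ hρ hα hx hx'
  have hx₀ := mem_phiStrip_of_add_two_of_sub_two hτ hx hx'
  simp only [← intervalIntegral.integral_const_mul]
  rw [← intervalIntegral.integral_add (hker _ hx _) (hker _ hx₀ _),
    ← intervalIntegral.integral_sub ((hker _ hx _).add (hker _ hx₀ _)) (hker _ hx' _)]
  simp only [phiKernel_ofReal_div_telescope hτ hρ hα hx hx' P hP]
  rw [intervalIntegral.integral_sub (hcert 2 (by rw [im_mul_ofNat]; positivity)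
      (by rw [im_mul_ofNat, mul_comm]))
    (by simpa using hcert 0 (by simp) (by simpa using hτ.le)),
    integral_phiCert_add_two hτ hn hρ hα hx hx', sub_self]

end Integral

theorem phiMat_eigenfunction_general {τ lam α ρ β σ : ℂ} (hτ : 0 < τ.im) {n : ℤ}
    (hn : α - β = 2 * n) (hρ : 0 < (τ * (1 + ρ + I * lam)).im)
    (hα : 0 < (τ * (α + ρ + I * lam)).im) {a b c d : ℂ} (ha : a = 1 + ρ + σ) (hb : b = 1 - ρ + σ)
    (hc : c = 1 + α + ρ - β - σ) (hd : d = 1 - α - ρ - β - σ) :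
    AnalyticOnNhd ℂ (phiMat τ lam α ρ β σ) (phiStrip τ (I * lam) β σ) ∧
      ∀ x, x + 2 ∈ phiStrip τ (I * lam) β σ → x - 2 ∈ phiStrip τ (I * lam) β σ →
        qpow τ (2 * x) ≠ 1 → qpow τ (2 * x) ≠ qpow τ 2 → qpow τ (2 * x) ≠ qpow τ (-2) →
        coefB τ β a b x * phiMat τ lam α ρ β σ (x + 2) +
            (-awA τ a b c d x - awA τ a b c d (-x)) * phiMat τ lam α ρ β σ x +
            coefD τ β c d x * phiMat τ lam α ρ β σ (x - 2) =
          eigenE τ lam β * phiMat τ lam α ρ β σ x := by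
  obtain ⟨κ, hκ⟩ := exists_phiMat_eq_mul_integral_phiKernel τ α ρ β σ (ne_zero_of_im_pos hτ) lam
  constructor
  · rw [funext hκ]
    exact ((differentiableOn_integral_phiKernel hτ hρ hα).const_mul κ).analyticOnNhd
      (isOpen_phiStrip _ _ _ _)
  · intro x hx hx' h₁ h₂ h₃
    have hden := awParam_den_ne_zero (l := I * lam) (α := α) (ρ := ρ) (β := β) (σ := σ) h₁ h₂ h₃
    have hB := coefB_mul_den β hden
    have hC := coefC_sub_eigenE_mul_den _ rfl hden
    have hD := coefD_mul_den hden
    have hint := integral_phiKernel_telescope hτ hn hρ hα hx hx' _ rfl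
    rw [← hB, ← hC, sub_eq_add_neg, ← neg_mul, ← hD] at hint
    subst ha hb hc hd
    refine mul_right_cancel₀ hden ?_
    simp only [hκ]
    linear_combination κ * hint

/-- The matrix coefficient `φ_λ` is analytic on the strip `|Re x| ≤ 2` and satisfies
the second order difference equation `B(x)φ_λ(x+2) + C(x)φ_λ(x) + D(x)φ_λ(x−2) =
E(λ;β)·φ_λ(x)` for generic `x ∈ iℝ`. -/
theorem phiMat_eigenfunction (t : ℝ) (ht : 0 < t) (τ : ℂ) (hτ : τ = Complex.I * (t : ℂ))
    (lam : ℝ) (m n : ℤ) (hm : 0 < m) (hn : 0 < n) (α β : ℂ)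
    (hα : α = 2 * (m : ℂ)) (hβ : β = 2 * (n : ℂ))
    (ρ σ : ℝ) (hρ : 3 ≤ ρ) (hσ : 3 ≤ σ) (a b c d : ℂ)
    (ha : a = 1 + (ρ : ℂ) + (σ : ℂ)) (hb : b = 1 - (ρ : ℂ) + (σ : ℂ))
    (hc : c = 1 + α + (ρ : ℂ) - β - (σ : ℂ)) (hd : d = 1 - α - (ρ : ℂ) - β - (σ : ℂ)) :
    (∀ x : ℂ, |x.re| ≤ 2 →
      AnalyticAt ℂ (phiMat τ (lam : ℂ) α (ρ : ℂ) β (σ : ℂ)) x) ∧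
    (∀ x : ℂ, x.re = 0 → qpow τ (2 * x) ≠ 1 → qpow τ (2 * x) ≠ qpow τ 2 →
      qpow τ (2 * x) ≠ qpow τ (-2) →
      coefB τ β a b x * phiMat τ (lam : ℂ) α (ρ : ℂ) β (σ : ℂ) (x + 2) +
          (-awA τ a b c d x - awA τ a b c d (-x)) *
            phiMat τ (lam : ℂ) α (ρ : ℂ) β (σ : ℂ) x +
          coefD τ β c d x * phiMat τ (lam : ℂ) α (ρ : ℂ) β (σ : ℂ) (x - 2) =
        eigenE τ (lam : ℂ) β * phiMat τ (lam : ℂ) α (ρ : ℂ) β (σ : ℂ) x) := by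
  have him : ∀ u, 0 < u.re → 0 < (τ * u).im := fun u hu => by
    simpa [hτ, ht] using hu
  have hlre : (I * lam : ℂ).re = 0 := by simp
  have hαre : 2 ≤ α.re := by simpa [hα] using Int.cast_one_le_of_pos hm
  have hβre : 2 ≤ β.re := by simpa [hβ] using Int.cast_one_le_of_pos hn
  have hstrip : ∀ x : ℂ, |x.re| ≤ 2 → x ∈ phiStrip τ (I * lam) β σ := fun x hx => by
    constructor <;>
    · refine him _ ?_
      simp only [add_re, sub_re, one_re, ofReal_re, hlre]
      linarith [abs_le.1 hx]
  obtain ⟨hanalytic, hequation⟩ := phiMat_eigenfunction_general (lam := lam) (n := m - n)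
    (show 0 < τ.im by simpa [hτ] using ht) (by rw [hα, hβ]; push_cast; ring)
    (him _ (by simp only [add_re, one_re, ofReal_re, hlre]; linarith))
    (him _ (by simp only [add_re, ofReal_re, hlre]; linarith)) ha hb hc hd
  exact ⟨fun x hx => hanalytic x (hstrip x hx), fun x hx =>
    hequation x (hstrip _ (by simp [hx])) (hstrip _ (by simp [hx]))⟩
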